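/- Let N ≥ 2, let Ω ⊂ ℝ^N be a nonempty bounded open set, and let p satisfy 2 < p < 2N/(N−2) if N ≥ 3 and 2 < p < ∞ if N = 2. Then there exists ρ > 0 such that every continuously differentiable function u : ℝ^N → ℝ with compact support contained in Ω and ∫_Ω |∇u|² dx ≤ ρ² satisfies J(u) ≥ (1/3) ∫_Ω |∇u|² dx. -/

import Mathlib

open MeasureTheory Metric Set

/-- The free-boundary energy functional
`J(u) = ∫_Ω [ (1/2)|∇u|² + χ_{u>1} − (1/p)(u−1)₊^p ] dx`. -/
noncomputable def J {N : ℕ} (Ω : Set (EuclideanSpace ℝ (Fin N))) (p : ℝ)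
    (u : EuclideanSpace ℝ (Fin N) → ℝ) : ℝ :=
  ∫ x in Ω, ((1 / 2) * ‖gradient u x‖ ^ 2
    + Set.indicator {y | 1 < u y} (fun _ => (1 : ℝ)) x
    - (1 / p) * (max (u x - 1) 0) ^ p)

open scoped NNReal ENNReal

lemma grad_norm_eq {N : ℕ} (u : EuclideanSpace ℝ (Fin N) → ℝ) (x : EuclideanSpace ℝ (Fin N)) :
    ‖gradient u x‖ = ‖fderiv ℝ u x‖ := by
  simp [gradient]

lemma supp_fderiv_sub {N : ℕ} {Ω : Set (EuclideanSpace ℝ (Fin N))}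
    {u : EuclideanSpace ℝ (Fin N) → ℝ} (h : tsupport u ⊆ Ω) :
    Function.support (fderiv ℝ u) ⊆ Ω :=
  (support_fderiv_subset ℝ).trans h

lemma sobolev_r {N : ℕ} (Ω : Set (EuclideanSpace ℝ (Fin N)))
    (hΩb : Bornology.IsBounded Ω) (p r : ℝ≥0) (hr1 : 1 ≤ r) (hr2 : r ≤ 2) (hrN : (r : ℝ) < N)
    (hrp : (r : ℝ)⁻¹ - (N : ℝ)⁻¹ ≤ (p : ℝ)⁻¹) :
    ∃ C : ℝ≥0, ∀ u : EuclideanSpace ℝ (Fin N) → ℝ,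
      ContDiff ℝ 1 u → tsupport u ⊆ Ω →
      eLpNorm u p volume ≤ C * eLpNorm (fderiv ℝ u) 2 volume := by
  have hfin : volume Ω ≠ ∞ := hΩb.measure_lt_top.ne
  set e : ℝ := 1 / (r : ℝ≥0∞).toReal - 1 / (2 : ℝ≥0∞).toReal with he
  have he0 : 0 ≤ e := by
    rw [he, sub_nonneg]
    simp only [ENNReal.coe_toReal, ENNReal.toReal_ofNat]
    have h1 : (1 : ℝ) ≤ r := by exact_mod_cast hr1
    have h2 : (r : ℝ) ≤ 2 := by exact_mod_cast hr2
    gcongr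
  have hfin2 : volume Ω ^ e ≠ ∞ := ENNReal.rpow_ne_top_of_nonneg he0 hfin
  refine ⟨eLpNormLESNormFDerivOfLeConst ℝ volume Ω r p * (volume Ω ^ e).toNNReal, ?_⟩
  intro u hu hs
  have h1 := eLpNorm_le_eLpNorm_fderiv_of_le (F := ℝ) volume hu ((subset_tsupport u).trans hs)
    (p := r) (q := p) hr1 (by simp; exact_mod_cast hrN) (by simpa using hrp) hΩb
  refine h1.trans ?_
  rw [ENNReal.coe_mul, mul_assoc, ENNReal.coe_toNNReal hfin2]
  gcongr
  have hsd := supp_fderiv_sub hs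
  rw [← eLpNorm_restrict_eq_of_support_subset (f := fderiv ℝ u) (μ := volume) (p := (r : ℝ≥0∞)) hsd,
    ← eLpNorm_restrict_eq_of_support_subset (f := fderiv ℝ u) (μ := volume) (p := 2) hsd]
  have h2 := eLpNorm_le_eLpNorm_mul_rpow_measure_univ (μ := volume.restrict Ω) (f := fderiv ℝ u)
    (p := (r : ℝ≥0∞)) (q := 2) (by exact_mod_cast hr2)
    (hu.continuous_fderiv one_ne_zero).aestronglyMeasurable
  rw [mul_comm]
  simpa [he] using h2

lemma sobolev_2 {N : ℕ} (hN : 2 ≤ N) (Ω : Set (EuclideanSpace ℝ (Fin N)))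
    (hΩb : Bornology.IsBounded Ω)
    (p : ℝ≥0) (hp : 2 < p) (hpSub : 3 ≤ N → (p : ℝ) < 2 * (N : ℝ) / ((N : ℝ) - 2)) :
    ∃ C : ℝ≥0, ∀ u : EuclideanSpace ℝ (Fin N) → ℝ,
      ContDiff ℝ 1 u → tsupport u ⊆ Ω →
      eLpNorm u p volume ≤ C * eLpNorm (fderiv ℝ u) 2 volume := by
  have hp' : (2 : ℝ) < p := by exact_mod_cast hp
  rcases hN.eq_or_lt with h | h
  · subst h
    refine sobolev_r Ω hΩb p (2 * p / (p + 2)) ?_ ?_ ?_ ?_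
    · rw [← NNReal.coe_le_coe]; push_cast
      rw [le_div_iff₀ (by positivity)]; linarith
    · rw [← NNReal.coe_le_coe]; push_cast
      rw [div_le_iff₀ (by positivity)]; linarith
    · push_cast
      rw [div_lt_iff₀ (by positivity)]; linarith
    · push_cast
      apply le_of_eq
      field_simp
      ring
  · have h3 : (3 : ℝ) ≤ N := by exact_mod_cast h
    refine sobolev_r Ω hΩb p 2 (by norm_num) le_rfl (by push_cast; linarith) ?_
    have := hpSub h
    rw [lt_div_iff₀ (by linarith)] at this
    push_cast
    have hN0 : (0 : ℝ) < N := by linarith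
    rw [inv_eq_one_div, inv_eq_one_div, inv_eq_one_div, div_sub_div _ _ (by norm_num) hN0.ne',
      div_le_div_iff₀ (by positivity) (by positivity)]
    linarith

lemma sobolev_real {N : ℕ} (hN : 2 ≤ N) (Ω : Set (EuclideanSpace ℝ (Fin N)))
    (hΩb : Bornology.IsBounded Ω)
    (p : ℝ) (hp : 2 < p) (hpSub : 3 ≤ N → (p : ℝ) < 2 * (N : ℝ) / ((N : ℝ) - 2)) :
    ∃ K : ℝ, 0 ≤ K ∧ ∀ u : EuclideanSpace ℝ (Fin N) → ℝ,
      ContDiff ℝ 1 u → HasCompactSupport u → tsupport u ⊆ Ω →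
      ∫ x in Ω, |u x| ^ p ≤ K * (∫ x in Ω, ‖gradient u x‖ ^ 2) ^ (p / 2) := by
  lift p to ℝ≥0 using by linarith
  obtain ⟨C, hC⟩ := sobolev_2 hN Ω hΩb p (by exact_mod_cast hp) hpSub
  have hp0 : (0 : ℝ) < p := by linarith
  refine ⟨(C : ℝ) ^ (p : ℝ), by positivity, fun u hu hc hs => ?_⟩
  have h := hC u hu hs
  have hsd := supp_fderiv_sub hs
  have hm1 : MemLp u p (volume : Measure (EuclideanSpace ℝ (Fin N))) :=
    hu.continuous.memLp_of_hasCompactSupport hc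
  have hm2 : MemLp (fderiv ℝ u) 2 (volume : Measure (EuclideanSpace ℝ (Fin N))) :=
    (hu.continuous_fderiv one_ne_zero).memLp_of_hasCompactSupport (hc.fderiv (𝕜 := ℝ))
  rw [← eLpNorm_restrict_eq_of_support_subset (f := fderiv ℝ u) (μ := volume) (p := 2) hsd,
    ← eLpNorm_restrict_eq_of_support_subset (f := u) (μ := volume) (p := (p : ℝ≥0∞)) ((subset_tsupport u).trans hs),
    (hm1.restrict Ω).eLpNorm_eq_integral_rpow_norm (by simpa using hp0.ne') (by simp),
    (hm2.restrict Ω).eLpNorm_eq_integral_rpow_norm (by simp) (by simp),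
    ← ENNReal.ofReal_coe_nnreal (p := C), ← ENNReal.ofReal_mul (by positivity),
    ENNReal.ofReal_le_ofReal_iff (by positivity)] at h
  simp only [ENNReal.coe_toReal, ENNReal.toReal_ofNat, Real.norm_eq_abs, Real.rpow_ofNat] at h
  simp only [grad_norm_eq]
  have hA : 0 ≤ ∫ x in Ω, |u x| ^ (p : ℝ) := by positivity
  have hB : 0 ≤ ∫ x in Ω, ‖fderiv ℝ u x‖ ^ 2 := by positivity
  have h' := Real.rpow_le_rpow (by positivity) h hp0.le
  rw [← Real.rpow_mul hA, inv_mul_cancel₀ hp0.ne', Real.rpow_one,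
    Real.mul_rpow (by positivity) (by positivity), ← Real.rpow_mul hB] at h'
  convert h' using 3
  ring

theorem stmt_11 {N : ℕ} (hN : 2 ≤ N) (Ω : Set (EuclideanSpace ℝ (Fin N)))
    (hΩo : IsOpen Ω) (hΩb : Bornology.IsBounded Ω) (hΩne : Ω.Nonempty)
    (p : ℝ) (hp : 2 < p) (hpSub : 3 ≤ N → p < 2 * (N : ℝ) / ((N : ℝ) - 2)) :
    ∃ ρ > (0 : ℝ), ∀ u : EuclideanSpace ℝ (Fin N) → ℝ,
      ContDiff ℝ 1 u → HasCompactSupport u → tsupport u ⊆ Ω →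
      (∫ x in Ω, ‖gradient u x‖ ^ 2) ≤ ρ ^ 2 →
      (1 / 3) * (∫ x in Ω, ‖gradient u x‖ ^ 2) ≤ J Ω p u := by
  obtain ⟨K, hK, hS⟩ := sobolev_real hN Ω hΩb p hp hpSub
  have hp0 : 0 < p := by linarith
  have hp2 : 0 < p - 2 := by linarith
  refine ⟨(1 / (6 * (K + 1))) ^ (1 / (p - 2)), by positivity, fun u hu hc hs hρ => ?_⟩
  have hSu := hS u hu hc hs
  have hgi : IntegrableOn (fun x => ‖gradient u x‖ ^ 2) Ω := by
    simp only [grad_norm_eq]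
    have hcont : Continuous (fun x => ‖fderiv ℝ u x‖ ^ 2) :=
      (hu.continuous_fderiv one_ne_zero).norm.pow 2
    refine (hcont.integrable_of_hasCompactSupport ?_).integrableOn
    exact (hc.fderiv (𝕜 := ℝ)).comp_left (g := fun y => ‖y‖ ^ 2) (by simp)
  have hii : IntegrableOn (Set.indicator {y | 1 < u y} (fun _ => (1 : ℝ))) Ω := by
    refine IntegrableOn.indicator ?_ ?_
    · exact integrableOn_const hΩb.measure_lt_top.ne
    · exact (isOpen_lt continuous_const hu.continuous).measurableSet
  have hmi : IntegrableOn (fun x => (max (u x - 1) 0) ^ p) Ω := by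
    have hcont : Continuous (fun x => (max (u x - 1) 0) ^ p) :=
      ((hu.continuous.sub continuous_const).max continuous_const).rpow_const
        (fun _ => Or.inr hp0.le)
    refine (hcont.integrable_of_hasCompactSupport ?_).integrableOn
    exact hc.comp_left (g := fun y : ℝ => (max (y - 1) 0) ^ p) (by simp [hp0.ne'])
  have hui : IntegrableOn (fun x => |u x| ^ p) Ω := by
    have hcont : Continuous (fun x => |u x| ^ p) :=
      hu.continuous.abs.rpow_const (fun _ => Or.inr hp0.le)
    refine (hcont.integrable_of_hasCompactSupport ?_).integrableOn
    exact hc.comp_left (g := fun y : ℝ => |y| ^ p) (by simp [hp0.ne'])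
  have hJ : (1 / 2) * (∫ x in Ω, ‖gradient u x‖ ^ 2) - (1 / p) * (∫ x in Ω, |u x| ^ p)
      ≤ J Ω p u := by
    rw [J, ← integral_const_mul, ← integral_const_mul,
      ← integral_sub (hgi.const_mul _) (hui.const_mul _)]
    refine integral_mono ((hgi.const_mul _).sub (hui.const_mul _))
      (((hgi.const_mul _).add hii).sub (hmi.const_mul _)) ?_
    intro x
    have h1 : 0 ≤ Set.indicator {y | 1 < u y} (fun _ => (1 : ℝ)) x :=
      Set.indicator_nonneg (fun _ _ => zero_le_one) x
    have h2 : (max (u x - 1) 0) ^ p ≤ |u x| ^ p := by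
      apply Real.rpow_le_rpow (le_max_right _ _) _ hp0.le
      exact max_le (by linarith [le_abs_self (u x)]) (abs_nonneg _)
    have h3 : (1 / p) * (max (u x - 1) 0) ^ p ≤ (1 / p) * |u x| ^ p := by gcongr
    simp only
    linarith
  refine le_trans ?_ hJ
  set A := ∫ x in Ω, ‖gradient u x‖ ^ 2 with hA
  have hA0 : 0 ≤ A := by positivity
  have hAp : A ^ (p / 2) = A * A ^ ((p - 2) / 2) := by
    rw [← Real.rpow_one_add' hA0 (by linarith)]
    congr 1; ring
  have hb : A ^ ((p - 2) / 2) ≤ 1 / (6 * (K + 1)) := by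
    refine (Real.rpow_le_rpow hA0 hρ (by positivity)).trans (le_of_eq ?_)
    rw [← Real.rpow_natCast, ← Real.rpow_mul (by positivity), ← Real.rpow_mul (by positivity)]
    convert Real.rpow_one _ using 2
    push_cast
    field_simp
  have hU0 : 0 ≤ ∫ x in Ω, |u x| ^ p := by positivity
  have h4 : (1 / p) * (∫ x in Ω, |u x| ^ p) ≤ ∫ x in Ω, |u x| ^ p := by
    refine mul_le_of_le_one_left hU0 ?_
    rw [div_le_one hp0]; linarith
  have h5 : K * A ^ (p / 2) ≤ A * (1 / 6) := by
    rw [hAp]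
    calc K * (A * A ^ ((p - 2) / 2)) ≤ K * (A * (1 / (6 * (K + 1)))) := by gcongr
      _ = A * (1 / 6) * (K / (K + 1)) := by field_simp
      _ ≤ A * (1 / 6) := by
        refine mul_le_of_le_one_right (by positivity) ?_
        rw [div_le_one (by positivity)]; linarith
  linarith
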